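/- Under these hypotheses, there exist elements u and v of D ∖ {1} that are not conjugate in G, such that D ∖ {1} is the disjoint union of the G-conjugacy class of u and the G-conjugacy class of v, and each of these two conjugacy classes has cardinality equal to the order of E. -/

import Mathlib

/-!
Write `Z = C_G(D)`; faithfulness of `E` gives `Z ≤ D`. If `u ∈ Z` has order `p`, the normal
`p`-complement of `C_G(u)` and the normal `p`-subgroup `D` of `C_G(u)` intersect trivially, so they
commute; hence the complement lies in `Z ≤ D` and is trivial. So `C_G(u)` is a `p`-group, and
`C_G(z) = D` for every `z ∈ Z ∖ {1}`.

There are exactly two classes of elements of order divisible by `p`, and they cover `D ∖ {1}`. If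
`D` were nonabelian, these classes would be `Z ∖ {1}` and `D ∖ Z`, of sizes `|G : D|` and
`|G : C_G(x)|` with `x ∈ D ∖ Z`. As `Z` is a proper subgroup of both `C_G(x)` and `D`, both of these
have order at least `2|Z|`, which contradicts `|C_G(x)| (|D| - |Z|) = |D| (|Z| - 1)`. So `D = Z`,
every element of order divisible by `p` centralizes an element of `Z ∖ {1}` and thus lies in `D`,
and both classes have size `|G : D| = |E|`.
-/

open Subgroup

section ConjugacyClasses

variable {G : Type*} [Group G]

theorem orderOf_eq_of_isConj {a b : G} (h : IsConj a b) : orderOf a = orderOf b := by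
  obtain ⟨c, rfl⟩ := isConj_iff.1 h
  exact ((MulAut.conj c).orderOf_eq a).symm

theorem mem_iff_mem_of_isConj {N : Subgroup G} [N.Normal] {a b : G} (h : IsConj a b) :
    a ∈ N ↔ b ∈ N := by
  obtain ⟨c, rfl⟩ := isConj_iff.1 h
  exact ⟨fun ha => Normal.conj_mem ‹_› a ha c,
    fun hb => by simpa [mul_assoc] using Normal.conj_mem ‹_› _ hb c⁻¹⟩

theorem card_isConj_eq_index_centralizer (u : G) :
    Nat.card {g : G // IsConj u g} = (centralizer {u}).index := by
  have horbit : {g : G | IsConj u g} = MulAction.orbit (ConjAct G) u := by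
    ext g
    rw [ConjAct.mem_orbit_conjAct, isConj_comm, Set.mem_ofPred_eq]
  calc Nat.card {g : G // IsConj u g} = (MulAction.orbit (ConjAct G) u).ncard := by
        rw [← horbit]; rfl
    _ = (MulAction.stabilizer (ConjAct G) u).index := (MulAction.index_stabilizer _ u).symm
    _ = (centralizer {u}).index := by rw [ConjAct.stabilizer_eq_centralizer]; rfl

theorem isConj_or_isConj_of_not_isConj {a b x y g : G} (hx : IsConj a x ∨ IsConj b x)
    (hy : IsConj a y ∨ IsConj b y) (hg : IsConj a g ∨ IsConj b g) (hxy : ¬ IsConj x y) :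
    IsConj x g ∨ IsConj y g := by
  simp only [← ConjClasses.mk_eq_mk_iff_isConj] at *
  grind

theorem exists_two_classes_of_card_conjClasses_eq_add_two [Finite (ConjClasses G)] {P : G → Prop}
    (hcard : Nat.card (ConjClasses G) =
      Nat.card {c : ConjClasses G // ∀ g ∈ c.carrier, ¬ P g} + 2) :
    ∃ a b : G, ¬ IsConj a b ∧ P a ∧ P b ∧ ∀ g, P g → IsConj a g ∨ IsConj b g := by
  classical
  have hcompl : Nat.card {c : ConjClasses G // ¬ ∀ g ∈ c.carrier, ¬ P g} = 2 := by
    have hsum := Nat.card_congr (Equiv.sumCompl fun c : ConjClasses G => ∀ g ∈ c.carrier, ¬ P g)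
    rw [Nat.card_sum, hcard] at hsum
    exact Nat.add_left_cancel hsum
  obtain ⟨⟨c, hc⟩, ⟨d, hd⟩, hne, huniv⟩ := Nat.card_eq_two_iff.1 hcompl
  push Not at hc hd
  obtain ⟨a, hac, ha⟩ := hc
  obtain ⟨b, hbd, hb⟩ := hd
  obtain rfl := ConjClasses.mem_carrier_iff_mk_eq.1 hac
  obtain rfl := ConjClasses.mem_carrier_iff_mk_eq.1 hbd
  refine ⟨a, b, fun hab => hne (Subtype.ext (ConjClasses.mk_eq_mk_iff_isConj.2 hab)), ha, hb,
    fun g hg => ?_⟩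
  have hmem := huniv.ge (Set.mem_univ
    ⟨ConjClasses.mk g, fun hreg => hreg g ConjClasses.mem_carrier_mk hg⟩)
  exact hmem.imp (fun h => (ConjClasses.mk_eq_mk_iff_isConj.1 (congrArg Subtype.val h)).symm)
    fun h => (ConjClasses.mk_eq_mk_iff_isConj.1 (congrArg Subtype.val h)).symm

theorem index_centralizer_add_card_of_isConj_of_notMem {K L : Subgroup G} [Finite L] [K.Normal]
    [L.Normal] (hKL : K ≤ L) {x : G} (hxL : x ∈ L) (hxK : x ∉ K)
    (hconj : ∀ g ∈ L, g ∉ K → IsConj x g) :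
    (centralizer {x}).index + Nat.card K = Nat.card L := by
  have hclass : {g : G | IsConj x g} = (L : Set G) \ K := by
    ext g
    refine ⟨fun h => ⟨?_, ?_⟩, fun h => hconj g h.1 h.2⟩
    · exact (mem_iff_mem_of_isConj h).1 hxL
    · exact mt (mem_iff_mem_of_isConj h).2 hxK
  calc (centralizer {x}).index + Nat.card K = ((L : Set G) \ K).ncard + (K : Set G).ncard := by
        rw [← card_isConj_eq_index_centralizer, ← hclass]; rfl
    _ = Nat.card L := Set.ncard_sdiff_add_ncard_of_subset hKL (Set.toFinite (L : Set G))

end ConjugacyClasses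

section Centralizers

variable {G : Type*} [Group G]

theorem two_mul_card_le_card_of_lt {H K : Subgroup G} [Finite K] (h : H < K) :
    2 * Nat.card H ≤ Nat.card K := by
  have hindex : 1 < H.relIndex K := by
    refine one_lt_index_of_ne_top fun htop => h.not_ge ?_
    exact subgroupOf_eq_top.1 htop
  rw [← relIndex_bot_left, ← relIndex_bot_left, ← relIndex_mul_relIndex ⊥ H K bot_le h.le, mul_comm]
  exact Nat.mul_le_mul_left _ hindex

theorem centralizer_singleton_eq_of_le {D : Subgroup G} {z : G} (hz : z ∈ centralizer (D : Set G))
    (h : centralizer {z} ≤ D) : centralizer {z} = D :=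
  h.antisymm fun g hg => mem_centralizer_singleton_iff.2 (hz g hg)

theorem centralizer_singleton_le_centralizer_pow (z : G) (n : ℕ) :
    centralizer {z} ≤ centralizer {z ^ n} := fun _ hg =>
  mem_centralizer_singleton_iff.2 (Commute.pow_right (mem_centralizer_singleton_iff.1 hg) n)

theorem exists_not_isConj_of_centralizer_eq [Finite G] {Z D : Subgroup G} [Z.Normal]
    [D.Normal] (hZD : Z ≤ D) {z x : G} (hzZ : z ∈ Z) (hz1 : z ≠ 1) (hz : centralizer {z} = D)
    (hzconj : ∀ g ∈ Z, g ≠ 1 → IsConj z g) (hxD : x ∈ D) (hxZ : x ∉ Z) (hx : Z ≤ centralizer {x}) :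
    ∃ g ∈ D, g ∉ Z ∧ ¬ IsConj x g := by
  by_contra! hxconj
  have hclass_z : D.index + 1 = Nat.card Z := by
    rw [← hz, ← card_bot (G := G)]
    exact index_centralizer_add_card_of_isConj_of_notMem bot_le hzZ (by simpa)
      fun g hgZ hg => hzconj g hgZ (by simpa using hg)
  have hclass_x : (centralizer {x}).index + Nat.card Z = Nat.card D :=
    index_centralizer_add_card_of_isConj_of_notMem hZD hxD hxZ hxconj
  have hcard : Nat.card (centralizer {x}) * (centralizer {x}).index = Nat.card D * D.index := by
    rw [card_mul_index, card_mul_index]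
  have hD : 2 * Nat.card Z ≤ Nat.card D :=
    two_mul_card_le_card_of_lt (SetLike.lt_iff_le_and_exists.2 ⟨hZD, x, hxD, hxZ⟩)
  have hC : 2 * Nat.card Z ≤ Nat.card (centralizer {x}) := two_mul_card_le_card_of_lt
    (SetLike.lt_iff_le_and_exists.2 ⟨hx, x, mem_centralizer_singleton_iff.2 rfl, hxZ⟩)
  nlinarith [Nat.mul_le_mul_right (centralizer {x}).index hC, Nat.card_pos (α := D)]

theorem le_centralizer_self_of_two_classes [Finite G] {D : Subgroup G} [D.Normal]
    (hbot : centralizer (D : Set G) ≠ ⊥)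
    (hcent : ∀ z ∈ centralizer (D : Set G), z ≠ 1 → centralizer {z} ≤ D)
    {a b : G} (hab : ∀ g ∈ D, g ≠ 1 → IsConj a g ∨ IsConj b g) :
    D ≤ centralizer (D : Set G) := by
  set Z := centralizer (D : Set G)
  by_contra hDZ
  obtain ⟨x, hxD, hxZ⟩ := SetLike.not_le_iff_exists.1 hDZ
  obtain ⟨z, hzZ, hz1⟩ := Z.bot_or_exists_ne_one.resolve_left hbot
  have hZD : Z ≤ D := fun g hg => by
    rcases eq_or_ne g 1 with rfl | hg1
    · exact D.one_mem
    · exact hcent g hg hg1 (mem_centralizer_singleton_iff.2 rfl)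
  have hne {g : G} (hg : g ∉ Z) : g ≠ 1 := (ne_of_mem_of_not_mem Z.one_mem hg).symm
  have hzx : ¬ IsConj z x := fun h => hxZ ((mem_iff_mem_of_isConj h).1 hzZ)
  have hcover (g : G) (hgD : g ∈ D) (hg1 : g ≠ 1) : IsConj z g ∨ IsConj x g :=
    isConj_or_isConj_of_not_isConj (hab z (hZD hzZ) hz1) (hab x hxD (hne hxZ)) (hab g hgD hg1) hzx
  have hzconj (g : G) (hgZ : g ∈ Z) (hg1 : g ≠ 1) : IsConj z g :=
    (hcover g (hZD hgZ) hg1).resolve_right fun h => hxZ ((mem_iff_mem_of_isConj h).2 hgZ)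
  obtain ⟨g, hgD, hgZ, hxg⟩ := exists_not_isConj_of_centralizer_eq hZD hzZ hz1
    (centralizer_singleton_eq_of_le hzZ (hcent z hzZ hz1)) hzconj hxD hxZ
    (centralizer_le (Set.singleton_subset_iff.2 hxD))
  have hzg : IsConj z g := (hcover g hgD (hne hgZ)).resolve_right hxg
  exact hgZ ((mem_iff_mem_of_isConj hzg).1 hzZ)

end Centralizers

section PGroups

variable {p : ℕ} {G : Type*} [Group G]

/-- The finite group `H` is `p`-nilpotent: it has a normal subgroup of order prime to `p` and of
`p`-power index. This is the condition imposed on the centralizers of elements of order `p`. -/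
def IsPNilpotent (p : ℕ) (H : Type*) [Group H] : Prop :=
  ∃ N : Subgroup H, N.Normal ∧ Nat.Coprime (Nat.card N) p ∧ ∃ n : ℕ, N.index = p ^ n

theorem isPGroup_of_isPNilpotent_of_centralizer_le {P : Subgroup G} [P.Normal]
    (hP : IsPGroup p P) (hcent : centralizer (P : Set G) ≤ P) (hG : IsPNilpotent p G) :
    IsPGroup p G := by
  obtain ⟨N, hN, hNp, n, hn⟩ := hG
  have hdisj : Disjoint N P := IsPGroup.card.disjoint_of_coprime hP hNp
  have hNcent : N ≤ centralizer (P : Set G) := fun x hx y hy =>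
    (commute_of_normal_of_disjoint N P hN ‹_› hdisj x y hx hy).symm
  have hNbot : N = ⊥ := hdisj.eq_bot_of_le (hNcent.trans hcent)
  rw [hNbot, index_bot] at hn
  exact IsPGroup.of_card hn

theorem centralizer_le_of_faithful {D E : Subgroup G} [D.Normal] (hD : IsPGroup p D)
    (hE : Nat.Coprime (Nat.card E) p) (hsup : D ⊔ E = ⊤)
    (hfaith : ∀ y ∈ E, (∀ d ∈ D, y * d = d * y) → y = 1) : centralizer (D : Set G) ≤ D := by
  intro s hs
  obtain ⟨d, hd, e, he, rfl⟩ := mem_sup_of_normal_left.1 (hsup.ge (mem_top s))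
  obtain ⟨k, hk⟩ := isPGroup_iff_pow_pow_eq_one.1 hD ⟨d, hd⟩
  have hdk : d ^ p ^ k = 1 := congrArg Subtype.val hk
  have hcomm : Commute d e := by
    have := hs d hd
    rwa [mul_assoc, mul_right_inj] at this
  have hpow : e ^ p ^ k ∈ centralizer (D : Set G) := by
    have := pow_mem hs (p ^ k)
    rwa [hcomm.mul_pow, hdk, one_mul] at this
  have hek : e ^ p ^ k = 1 := hfaith _ (E.pow_mem he _) fun x hx => (hpow x hx).symm
  have he1 : e = 1 := by
    rw [← orderOf_eq_one_iff]
    exact Nat.eq_one_of_dvd_coprimes (hE.pow_right k) (E.orderOf_dvd_natCard he)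
      (orderOf_dvd_of_pow_eq_one hek)
  simpa [he1] using hd

theorem index_eq_card_of_inf_eq_bot_of_sup_eq_top {D E : Subgroup G} [D.Normal]
    (hinf : D ⊓ E = ⊥) (hsup : D ⊔ E = ⊤) : D.index = Nat.card E := by
  refine IsComplement'.index_eq_card (isComplement'_of_disjoint_and_mul_eq_univ ?_ ?_)
  · exact (disjoint_iff.2 hinf).symm
  · rw [← mul_normal, sup_comm, hsup, coe_top]

variable [Fact p.Prime] {D : Subgroup G}

theorem ne_one_of_prime_dvd_orderOf {g : G} (hg : p ∣ orderOf g) : g ≠ 1 := by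
  rintro rfl
  exact (Fact.out : p.Prime).not_dvd_one (orderOf_one (G := G) ▸ hg)

theorem prime_dvd_orderOf_of_mem (hD : IsPGroup p D) {g : G} (hg : g ∈ D) (hg1 : g ≠ 1) :
    p ∣ orderOf g := by
  have := hD.dvd_orderOf (g := ⟨g, hg⟩) (by simpa using hg1)
  rwa [orderOf_mk] at this

theorem centralizer_ne_bot_of_isPGroup [Finite D] (hD : IsPGroup p D) (hbot : D ≠ ⊥) :
    centralizer (D : Set G) ≠ ⊥ := by
  have := D.nontrivial_iff_ne_bot.2 hbot
  have := hD.center_nontrivial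
  obtain ⟨z, hz⟩ := exists_ne (1 : center D)
  refine fun hcent => hz (Subtype.ext (Subtype.ext ((eq_bot_iff_forall _).1 hcent z ?_)))
  exact fun d hd => congrArg Subtype.val (mem_center_iff.1 z.2 ⟨d, hd⟩)

theorem le_of_isPGroup_of_not_dvd_index [D.Normal] (hD : IsPGroup p D) (hindex : ¬ p ∣ D.index)
    {H : Subgroup G} (hH : IsPGroup p H) : H ≤ D :=
  sup_eq_right.1 <|
    (hD.toSylow hindex).is_maximal' (hH.to_sup_of_normal_right hD) le_sup_right

theorem centralizer_singleton_le_of_isPNilpotent [D.Normal] (hD : IsPGroup p D)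
    (hindex : ¬ p ∣ D.index) (hcent : centralizer (D : Set G) ≤ D) {u : G}
    (hu : u ∈ centralizer (D : Set G)) (hnilp : IsPNilpotent p (centralizer {u})) :
    centralizer {u} ≤ D := by
  have hDu : D ≤ centralizer {u} := fun g hg => mem_centralizer_singleton_iff.2 (hu g hg)
  refine le_of_isPGroup_of_not_dvd_index hD hindex ?_
  refine isPGroup_of_isPNilpotent_of_centralizer_le (P := D.subgroupOf (centralizer {u}))
    hD.comap_subtype (fun x hx => hcent fun d hd => ?_) hnilp
  exact congrArg Subtype.val (hx ⟨d, hDu hd⟩ hd)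

theorem centralizer_singleton_le_of_mem_centralizer [Finite G] [D.Normal] (hD : IsPGroup p D)
    (hindex : ¬ p ∣ D.index) (hcent : centralizer (D : Set G) ≤ D)
    (hnilp : ∀ u ∈ centralizer (D : Set G), orderOf u = p → IsPNilpotent p (centralizer {u}))
    {z : G} (hz : z ∈ centralizer (D : Set G)) (hz1 : z ≠ 1) : centralizer {z} ≤ D := by
  have hpz : p ∣ orderOf z := prime_dvd_orderOf_of_mem hD (hcent hz) hz1
  set u := z ^ (orderOf z / p)
  have hu : u ∈ centralizer (D : Set G) := pow_mem hz _
  have hup : orderOf u = p := orderOf_pow_orderOf_div (orderOf_pos z).ne' hpz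
  exact (centralizer_singleton_le_centralizer_pow z _).trans
    (centralizer_singleton_le_of_isPNilpotent hD hindex hcent hu (hnilp u hu hup))

theorem mem_and_ne_one_iff_prime_dvd_orderOf [Finite G] [D.Normal] (hD : IsPGroup p D)
    (hindex : ¬ p ∣ D.index) (hcent : ∀ z ∈ D, z ≠ 1 → centralizer {z} ≤ D) {g : G} :
    g ∈ D ∧ g ≠ 1 ↔ p ∣ orderOf g := by
  refine ⟨fun h => prime_dvd_orderOf_of_mem hD h.1 h.2, fun hg => ?_⟩
  refine ⟨?_, ne_one_of_prime_dvd_orderOf hg⟩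
  set z := g ^ (orderOf g / p)
  have hz : orderOf z = p := orderOf_pow_orderOf_div (orderOf_pos g).ne' hg
  have hzD : z ∈ D := by
    refine le_of_isPGroup_of_not_dvd_index hD hindex (H := zpowers z) ?_ (mem_zpowers z)
    exact IsPGroup.of_card (n := 1) (by rw [Nat.card_zpowers, hz, pow_one])
  exact hcent z hzD (ne_one_of_prime_dvd_orderOf hz.symm.dvd)
    (mem_centralizer_singleton_iff.2 (Commute.self_pow g _))

end PGroups

theorem stmt_4_general {p : ℕ} (hp : p.Prime) {G : Type*} [Group G] [Finite G] {D : Subgroup G}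
    [D.Normal] (hD : IsPGroup p D) (hindex : ¬ p ∣ D.index)
    (hcent : centralizer (D : Set G) ≤ D)
    (hcard : Nat.card (ConjClasses G) =
      Nat.card {c : ConjClasses G // ∀ g ∈ c.carrier, ¬ p ∣ orderOf g} + 2)
    (hnilp : ∀ u ∈ centralizer (D : Set G), orderOf u = p → IsPNilpotent p (centralizer {u})) :
    ∃ u v : G, u ∈ D ∧ u ≠ 1 ∧ v ∈ D ∧ v ≠ 1 ∧ ¬ IsConj u v ∧
      {g : G | g ∈ D ∧ g ≠ 1} = {g : G | IsConj u g} ∪ {g : G | IsConj v g} ∧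
      Nat.card {g : G // IsConj u g} = D.index ∧ Nat.card {g : G // IsConj v g} = D.index := by
  have : Fact p.Prime := ⟨hp⟩
  obtain ⟨a, b, hab, ha, hb, hcover⟩ := exists_two_classes_of_card_conjClasses_eq_add_two hcard
  have hcentZ : ∀ z ∈ centralizer (D : Set G), z ≠ 1 → centralizer {z} ≤ D := fun z hz hz1 =>
    centralizer_singleton_le_of_mem_centralizer hD hindex hcent hnilp hz hz1
  have hDZ : D ≤ centralizer (D : Set G) := by
    rcases eq_or_ne D ⊥ with rfl | hbot
    · exact bot_le
    · exact le_centralizer_self_of_two_classes (centralizer_ne_bot_of_isPGroup hD hbot) hcentZ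
        fun g hg hg1 => hcover g (prime_dvd_orderOf_of_mem hD hg hg1)
  have hmem {g : G} : g ∈ D ∧ g ≠ 1 ↔ p ∣ orderOf g :=
    mem_and_ne_one_iff_prime_dvd_orderOf hD hindex fun z hz => hcentZ z (hDZ hz)
  have hclass {g : G} (hg : g ∈ D ∧ g ≠ 1) : Nat.card {x : G // IsConj g x} = D.index := by
    rw [card_isConj_eq_index_centralizer,
      centralizer_singleton_eq_of_le (hDZ hg.1) (hcentZ g (hDZ hg.1) hg.2)]
  refine ⟨a, b, (hmem.2 ha).1, (hmem.2 ha).2, (hmem.2 hb).1, (hmem.2 hb).2, hab, ?_,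
    hclass (hmem.2 ha), hclass (hmem.2 hb)⟩
  ext g
  refine hmem.trans ⟨hcover g, ?_⟩
  rintro (h | h)
  · exact orderOf_eq_of_isConj h ▸ ha
  · exact orderOf_eq_of_isConj h ▸ hb

/-- Hypotheses: `G` is a finite group with normal Sylow `p`-subgroup `D`, `E` is a
`p'`-complement acting faithfully on `D`, `k(G) - ℓ_p(G) = 2`, and the centralizer of
every element of `D` of order `p` is `p`-nilpotent. -/
theorem stmt_4 {p : ℕ} (hp : p.Prime) {G : Type*} [Group G] [Fintype G]
    (D E : Subgroup G)
    (hDn : D.Normal)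
    (hDpgrp : IsPGroup p D)
    (hDsyl : ¬ p ∣ D.index)
    (hEp' : Nat.Coprime (Nat.card E) p)
    (hDEinf : D ⊓ E = ⊥)
    (hDEsup : D ⊔ E = ⊤)
    (hfaith : ∀ y ∈ E, (∀ d ∈ D, y * d = d * y) → y = 1)
    (hkl : Nat.card (ConjClasses G) =
      Nat.card {c : ConjClasses G // ∀ g ∈ c.carrier, ¬ p ∣ orderOf g} + 2)
    (hnilp : ∀ u : G, u ∈ D → orderOf u = p →
      ∃ N : Subgroup (Subgroup.centralizer ({u} : Set G)), N.Normal ∧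
        Nat.Coprime (Nat.card N) p ∧ ∃ n : ℕ, N.index = p ^ n) :
    ∃ u v : G, u ∈ D ∧ u ≠ 1 ∧ v ∈ D ∧ v ≠ 1 ∧ ¬ IsConj u v ∧
      {g : G | g ∈ D ∧ g ≠ 1} = {g : G | IsConj u g} ∪ {g : G | IsConj v g} ∧
      Nat.card {g : G // IsConj u g} = Nat.card E ∧
      Nat.card {g : G // IsConj v g} = Nat.card E := by
  have hindex : D.index = Nat.card E := index_eq_card_of_inf_eq_bot_of_sup_eq_top hDEinf hDEsup
  have hcent := centralizer_le_of_faithful hDpgrp hEp' hDEsup hfaith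
  exact hindex ▸ stmt_4_general hp hDpgrp hDsyl hcent hkl fun u hu => hnilp u (hcent hu)
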